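/- Let 0 < ℓ ≤ r. Then w_r(x) ≤ w_ℓ(x) ≤ (r/ℓ) w_r(x) for every x ∈ S. -/

import Mathlib

open scoped RealInnerProductSpace

/-- The regularized and partially linearized merit function
`w_ℓ(x) = max_{y ∈ S} min_i (⟨∇f_i(x), x - y⟩ + g_i(x) - g_i(y) - (ℓ/2)‖x - y‖²)`. -/
noncomputable def meritW {n m : ℕ} (ℓ : ℝ) (S : Set (EuclideanSpace ℝ (Fin n)))
    (Gf : Fin m → EuclideanSpace ℝ (Fin n) → EuclideanSpace ℝ (Fin n))
    (g : Fin m → EuclideanSpace ℝ (Fin n) → ℝ)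
    (x : EuclideanSpace ℝ (Fin n)) : ℝ :=
  sSup ((fun y => ⨅ i, (⟪Gf i x, x - y⟫ + g i x - g i y - ℓ / 2 * ‖x - y‖ ^ 2)) '' S)

/-!
Write the quantity inside the minimum as a regularized gap `γ_c(x, y)`, where `c` weighs the
quadratic term. It decreases in `c`, which gives the first inequality. For the second, move from `y`
to the point `z = x + t (y - x)` with `t = ℓ / r`: the linear part scales by `t`, convexity bounds
`t (g x - g y)` by `g x - g z`, and the quadratic term scales by `t²`, so
`t γ_{tr}(x, y) ≤ γ_r(x, z)`, where `tr = ℓ`. Both comparisons pass to the real suprema because a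
convex lower semicontinuous function has a continuous affine minorant, whose growth the quadratic
term dominates.
-/

open AffineMap Set

lemma exists_continuous_affine_le {E : Type*} [AddCommGroup E] [Module ℝ E] [TopologicalSpace E]
    [IsTopologicalAddGroup E] [ContinuousSMul ℝ E] [LocallyConvexSpace ℝ E] {s : Set E} {g : E → ℝ}
    (hs : IsClosed s) (hsne : s.Nonempty) (hg : ConvexOn ℝ s g) (hgc : LowerSemicontinuousOn g s) :
    ∃ (l : StrongDual ℝ E) (b : ℝ), ∀ y ∈ s, l y + b ≤ g y := by
  obtain ⟨x, hx⟩ := hsne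
  obtain ⟨l, b, hlb, -⟩ := hg.exists_affine_le_of_lt (𝕜 := ℝ) hx (sub_one_lt (g x)) hs hgc
  exact ⟨l, b, fun y hy => hlb ⟨y, hy⟩⟩

lemma mul_sub_half_mul_sq_le {c : ℝ} (hc : 0 < c) (a d : ℝ) :
    a * d - c / 2 * d ^ 2 ≤ a ^ 2 / (2 * c) := by
  rw [le_div_iff₀ (by positivity)]
  linarith [sq_nonneg (a - c * d)]

section RegularizedMerit

variable {E : Type*} [NormedAddCommGroup E] [NormedSpace ℝ E]

/-- The regularized gap between `x` and `y` of an objective `f + g` in which the smooth part `f` has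
been linearized at `x`. The functional `p` takes the place of the derivative of `f` at `x`. -/
noncomputable def regularizedGap (c : ℝ) (p : StrongDual ℝ E) (g : E → ℝ) (x y : E) : ℝ :=
  p (x - y) + g x - g y - c / 2 * ‖x - y‖ ^ 2

lemma regularizedGap_antitone (p : StrongDual ℝ E) (g : E → ℝ) (x y : E) :
    Antitone fun c => regularizedGap c p g x y := by
  intro c d hcd
  simp only [regularizedGap]
  gcongr

lemma mul_regularizedGap_le_regularizedGap_lineMap {S : Set E} {g : E → ℝ} (hg : ConvexOn ℝ S g)
    {x y : E} (hx : x ∈ S) (hy : y ∈ S) {t : ℝ} (ht : t ∈ Icc (0 : ℝ) 1) (c : ℝ)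
    (p : StrongDual ℝ E) :
    t * regularizedGap (t * c) p g x y ≤ regularizedGap c p g x (lineMap x y t) := by
  have hdiff : x - lineMap x y t = t • (x - y) := left_vsub_lineMap x y t
  have hconv : g (lineMap x y t) ≤ (1 - t) * g x + t * g y := by
    rw [lineMap_apply_module]
    exact hg.2 hx hy (sub_nonneg.2 ht.2) ht.1 (sub_add_cancel 1 t)
  simp only [regularizedGap, hdiff, map_smul, smul_eq_mul, norm_smul, Real.norm_of_nonneg ht.1]
  linarith

lemma exists_forall_regularizedGap_le {s : Set E} {g : E → ℝ} (hs : IsClosed s)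
    (hsne : s.Nonempty) (hg : ConvexOn ℝ s g) (hgc : LowerSemicontinuousOn g s) {c : ℝ}
    (hc : 0 < c) (p : StrongDual ℝ E) (x : E) :
    ∃ B, ∀ y ∈ s, regularizedGap c p g x y ≤ B := by
  obtain ⟨l, b, hlb⟩ := exists_continuous_affine_le hs hsne hg hgc
  refine ⟨‖p + l‖ ^ 2 / (2 * c) + (g x - l x - b), fun y hy => ?_⟩
  calc regularizedGap c p g x y
      ≤ p (x - y) + g x - (l y + b) - c / 2 * ‖x - y‖ ^ 2 := by
        unfold regularizedGap
        gcongr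
        exact hlb y hy
    _ = (p + l) (x - y) - c / 2 * ‖x - y‖ ^ 2 + (g x - l x - b) := by
        rw [add_apply, map_sub l]
        ring
    _ ≤ ‖p + l‖ * ‖x - y‖ - c / 2 * ‖x - y‖ ^ 2 + (g x - l x - b) := by
        gcongr
        exact (le_abs_self _).trans ((p + l).le_opNorm _)
    _ ≤ ‖p + l‖ ^ 2 / (2 * c) + (g x - l x - b) := by
        gcongr
        exact mul_sub_half_mul_sq_le hc _ _

variable {ι : Type*}

/-- The regularized and partially linearized merit function of a family of objectives `f i + g i` on
a subset of a normed space. Its value at `x` depends on the smooth parts only through functionals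
`p i`, which take the place of their derivatives at `x`. As a real supremum it is `0` when the
regularized gaps are unbounded on `S`. -/
noncomputable def regularizedMerit (c : ℝ) (S : Set E) (p : ι → StrongDual ℝ E) (g : ι → E → ℝ)
    (x : E) : ℝ :=
  ⨆ y : S, ⨅ i, regularizedGap c (p i) (g i) x y

lemma meritW_eq_regularizedMerit {n m : ℕ} (c : ℝ) (S : Set (EuclideanSpace ℝ (Fin n)))
    (Gf : Fin m → EuclideanSpace ℝ (Fin n) → EuclideanSpace ℝ (Fin n))
    (g : Fin m → EuclideanSpace ℝ (Fin n) → ℝ) (x : EuclideanSpace ℝ (Fin n)) :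
    meritW c S Gf g x = regularizedMerit c S (fun i => innerSL ℝ (Gf i x)) g x :=
  sSup_image'

variable [Finite ι] {S : Set E} {p : ι → StrongDual ℝ E} {g : ι → E → ℝ} {x : E} {c : ℝ}

lemma bddAbove_range_iInf_regularizedGap [Nonempty ι] (hg : ∀ i, ConvexOn ℝ univ (g i))
    (hgc : ∀ i, LowerSemicontinuous (g i)) (hc : 0 < c) :
    BddAbove (range fun y : S => ⨅ i, regularizedGap c (p i) (g i) x y) := by
  obtain ⟨i⟩ := ‹Nonempty ι›
  obtain ⟨B, hB⟩ := exists_forall_regularizedGap_le isClosed_univ univ_nonempty (hg i)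
    ((hgc i).lowerSemicontinuousOn univ) hc (p i) x
  exact ⟨B, forall_mem_range.2 fun y => Finite.ciInf_le_of_le i (hB y (mem_univ _))⟩

lemma regularizedMerit_le_of_le {d : ℝ} (hcd : c ≤ d)
    (hbdd : BddAbove (range fun y : S => ⨅ i, regularizedGap c (p i) (g i) x y)) :
    regularizedMerit d S p g x ≤ regularizedMerit c S p g x :=
  ciSup_mono hbdd fun y => Finite.ciInf_mono fun i => regularizedGap_antitone (p i) (g i) x y hcd

lemma mul_regularizedMerit_mul_le (hS : Convex ℝ S) (hg : ∀ i, ConvexOn ℝ S (g i)) (hx : x ∈ S)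
    {t : ℝ} (ht : t ∈ Icc (0 : ℝ) 1)
    (hbdd : BddAbove (range fun y : S => ⨅ i, regularizedGap c (p i) (g i) x y)) :
    t * regularizedMerit (t * c) S p g x ≤ regularizedMerit c S p g x := by
  have : Nonempty S := ⟨⟨x, hx⟩⟩
  simp only [regularizedMerit, Real.mul_iSup_of_nonneg ht.1, Real.mul_iInf_of_nonneg ht.1]
  refine ciSup_mono_of_forall_exists hbdd fun y => ⟨⟨lineMap x y t, hS.lineMap_mem hx y.2 ht⟩, ?_⟩
  exact Finite.ciInf_mono fun i =>
    mul_regularizedGap_le_regularizedGap_lineMap (hg i) hx y.2 ht c (p i)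

theorem meritW_parameter_comparison_general [Nonempty ι] (hS : Convex ℝ S)
    (hg : ∀ i, ConvexOn ℝ univ (g i)) (hgc : ∀ i, LowerSemicontinuous (g i)) (hx : x ∈ S)
    {ℓ r : ℝ} (hℓ : 0 < ℓ) (hℓr : ℓ ≤ r) :
    regularizedMerit r S p g x ≤ regularizedMerit ℓ S p g x ∧
      regularizedMerit ℓ S p g x ≤ r / ℓ * regularizedMerit r S p g x := by
  have hr : 0 < r := hℓ.trans_le hℓr
  refine ⟨regularizedMerit_le_of_le hℓr (bddAbove_range_iInf_regularizedGap hg hgc hℓ), ?_⟩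
  have ht : ℓ / r ∈ Icc (0 : ℝ) 1 := ⟨by positivity, (div_le_one hr).2 hℓr⟩
  have hscale := mul_regularizedMerit_mul_le hS (fun i => (hg i).subset (subset_univ S) hS) hx ht
    (bddAbove_range_iInf_regularizedGap (p := p) hg hgc hr)
  rw [div_mul_cancel₀ ℓ hr.ne'] at hscale
  rwa [← inv_div ℓ r, ← div_eq_inv_mul, le_div_iff₀' (by positivity)]

end RegularizedMerit

/-- for `0 < ℓ ≤ r`, `w_r(x) ≤ w_ℓ(x) ≤ (r/ℓ) w_r(x)` for every `x ∈ S`. -/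
theorem meritW_parameter_comparison {n m : ℕ} (hm : 0 < m)
    (S : Set (EuclideanSpace ℝ (Fin n))) (hS : S.Nonempty)
    (hSclosed : IsClosed S) (hSconv : Convex ℝ S)
    (f g : Fin m → EuclideanSpace ℝ (Fin n) → ℝ)
    (Gf : Fin m → EuclideanSpace ℝ (Fin n) → EuclideanSpace ℝ (Fin n))
    (hGf : ∀ i y, HasGradientAt (f i) (Gf i y) y)
    (hgconv : ∀ i, ConvexOn ℝ Set.univ (g i))
    (ℓ r : ℝ) (hℓ : 0 < ℓ) (hℓr : ℓ ≤ r) :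
    ∀ x ∈ S, meritW r S Gf g x ≤ meritW ℓ S Gf g x ∧
      meritW ℓ S Gf g x ≤ r / ℓ * meritW r S Gf g x := by
  have : Nonempty (Fin m) := Fin.pos_iff_nonempty.1 hm
  simpa only [meritW_eq_regularizedMerit] using fun x hx =>
    meritW_parameter_comparison_general hSconv hgconv
      (fun i => (hgconv i).locallyLipschitz.continuous.lowerSemicontinuous) hx hℓ hℓr
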